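/- For every integer g ≥ 7, the number of numerical semigroups with multiplicity 4, genus g, and Frobenius number congruent to 3 modulo 4 equals ⌊g/5⌋² − ⌊2g/5⌋² − (3/2)⌊(g+2)/3⌋² − (3/2)⌊(g+5)/6⌋² + ⌊g/5⌋ + (g − 1 − ⌊g/5⌋)·⌊2g/5⌋ + (g/2 − 3/4)·⌊g/2⌋ + (g + 1/2)·⌊(g+2)/3⌋ + (g + 1/2 − ⌊g/2⌋)·⌊(g+5)/6⌋ − 5g²/8 + 5g/8, where the expression is evaluated in ℚ (it is an integer). -/

import Mathlib

/-- A numerical semigroup: a subset of ℕ containing 0, closed under addition,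
with finite complement. -/
def IsNumericalSemigroup (S : Set ℕ) : Prop :=
  0 ∈ S ∧ (∀ a ∈ S, ∀ b ∈ S, a + b ∈ S) ∧ Sᶜ.Finite

/-- The genus: the number of gaps of `S`. -/
noncomputable def nsGenus (S : Set ℕ) : ℕ := Sᶜ.ncard

/-- The Frobenius number: the largest gap of `S`. -/
noncomputable def nsFrobenius (S : Set ℕ) : ℕ := sSup Sᶜ

/-- The multiplicity: the least positive element of `S`. -/
noncomputable def nsMultiplicity (S : Set ℕ) : ℕ := sInf {n | n ∈ S ∧ n ≠ 0}

/-- A minimal generator: a nonzero element of `S` that is not a sum of two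
nonzero elements of `S`. -/
def IsMinimalGenerator (S : Set ℕ) (n : ℕ) : Prop :=
  n ∈ S ∧ n ≠ 0 ∧ ¬ ∃ a b, a ∈ S ∧ b ∈ S ∧ a ≠ 0 ∧ b ≠ 0 ∧ a + b = n

/-- The embedding dimension: the number of minimal generators of `S`. -/
noncomputable def nsEmbDim (S : Set ℕ) : ℕ := {n | IsMinimalGenerator S n}.ncard

/-- The number of numerical semigroups with multiplicity `m` and genus `g`. -/
noncomputable def numSgps (m g : ℕ) : ℕ :=
  {S : Set ℕ | IsNumericalSemigroup S ∧ nsMultiplicity S = m ∧ nsGenus S = g}.ncard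

/-- The number of numerical semigroups with multiplicity `m`, genus `g`, and
Frobenius number congruent to `r` modulo 4. -/
noncomputable def numSgpsFrobMod4 (m g r : ℕ) : ℕ :=
  {S : Set ℕ | IsNumericalSemigroup S ∧ nsMultiplicity S = m ∧ nsGenus S = g ∧
    nsFrobenius S % 4 = r}.ncard

open Finset

/-- The subset of `ℕ` containing all multiples of `4` and whose least elements in the residue
classes `1, 2, 3` modulo `4` are `4 * x + 1`, `4 * y + 2`, `4 * z + 3` (Kunz coordinates). -/
def kunzSet (x y z : ℕ) : Set ℕ :=
  {n | (n % 4 = 1 → x ≤ n / 4) ∧ (n % 4 = 2 → y ≤ n / 4) ∧ (n % 4 = 3 → z ≤ n / 4)}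

theorem mem_kunzSet {x y z n : ℕ} : n ∈ kunzSet x y z ↔
    (n % 4 = 1 → x ≤ n / 4) ∧ (n % 4 = 2 → y ≤ n / 4) ∧ (n % 4 = 3 → z ≤ n / 4) := Iff.rfl

theorem compl_kunzSet (x y z : ℕ) : (kunzSet x y z)ᶜ =
    (((range x).image (4 * · + 1) ∪ (range y).image (4 * · + 2)) ∪
      (range z).image (4 * · + 3) : Finset ℕ) := by
  ext n
  simp only [Set.mem_compl_iff, mem_kunzSet, coe_union, coe_image, Set.mem_union, Set.mem_image,
    mem_coe, mem_range]
  constructor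
  · intro h
    have : n % 4 = 1 ∧ n / 4 < x ∨ n % 4 = 2 ∧ n / 4 < y ∨ n % 4 = 3 ∧ n / 4 < z := by omega
    rcases this with h | h | h
    · exact Or.inl (Or.inl ⟨n / 4, by omega, by omega⟩)
    · exact Or.inl (Or.inr ⟨n / 4, by omega, by omega⟩)
    · exact Or.inr ⟨n / 4, by omega, by omega⟩
  · rintro ((⟨k, hk, rfl⟩ | ⟨k, hk, rfl⟩) | ⟨k, hk, rfl⟩) <;> omega

theorem finite_compl_kunzSet (x y z : ℕ) : (kunzSet x y z)ᶜ.Finite := by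
  rw [compl_kunzSet]
  exact finite_toSet _

theorem nsGenus_kunzSet (x y z : ℕ) : nsGenus (kunzSet x y z) = x + y + z := by
  rw [nsGenus, compl_kunzSet, Set.ncard_coe_finset, card_union_of_disjoint,
    card_union_of_disjoint, card_image_of_injective, card_image_of_injective,
    card_image_of_injective]
  · simp
  any_goals
    intro a b h
    simp only at h
    omega
  all_goals
    rw [disjoint_left]
    intro n h₁ h₂
    simp only [mem_union, mem_image, mem_range] at h₁ h₂
    obtain ⟨b, _, h₂⟩ := h₂
  · obtain ⟨a, _, h₁⟩ := h₁
    omega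
  · rcases h₁ with ⟨a, _, h₁⟩ | ⟨a, _, h₁⟩ <;> omega

theorem isNumericalSemigroup_kunzSet_iff (x y z : ℕ) :
    IsNumericalSemigroup (kunzSet x y z) ↔
      y ≤ 2 * x ∧ z ≤ x + y ∧ y ≤ 2 * z + 1 ∧ x ≤ y + z + 1 := by
  constructor
  · rintro ⟨-, h, -⟩
    have h₁ : 4 * x + 1 ∈ kunzSet x y z := by rw [mem_kunzSet]; omega
    have h₂ : 4 * y + 2 ∈ kunzSet x y z := by rw [mem_kunzSet]; omega
    have h₃ : 4 * z + 3 ∈ kunzSet x y z := by rw [mem_kunzSet]; omega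
    refine ⟨?_, ?_, ?_, ?_⟩
    · have := (h _ h₁ _ h₁).2.1
      omega
    · have := (h _ h₁ _ h₂).2.2
      omega
    · have := (h _ h₃ _ h₃).2.1
      omega
    · have := (h _ h₂ _ h₃).1
      omega
  · rintro ⟨h₁₁, h₁₂, h₃₃, h₂₃⟩
    refine ⟨by rw [mem_kunzSet]; omega, fun a ha b hb ↦ ?_, finite_compl_kunzSet x y z⟩
    rw [mem_kunzSet] at ha hb ⊢
    have ha4 : a % 4 = 0 ∨ a % 4 = 1 ∨ a % 4 = 2 ∨ a % 4 = 3 := by omega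
    have hb4 : b % 4 = 0 ∨ b % 4 = 1 ∨ b % 4 = 2 ∨ b % 4 = 3 := by omega
    rcases ha4 with h | h | h | h <;> rcases hb4 with h' | h' | h' | h' <;>
      simp only [h, h', forall_const, reduceCtorEq] at ha hb <;> omega

theorem nsMultiplicity_eq_four_iff {S : Set ℕ} :
    nsMultiplicity S = 4 ↔ 4 ∈ S ∧ 1 ∉ S ∧ 2 ∉ S ∧ 3 ∉ S := by
  unfold nsMultiplicity
  constructor
  · intro h
    have hlt : ∀ n < 4, n ≠ 0 → n ∉ S := fun n hn h0 hS ↦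
      Nat.notMem_of_lt_sInf (hn.trans_eq h.symm) ⟨hS, h0⟩
    have hmem : sInf {n | n ∈ S ∧ n ≠ 0} ∈ {n | n ∈ S ∧ n ≠ 0} :=
      Nat.sInf_mem (Nat.nonempty_of_pos_sInf (by omega))
    rw [h] at hmem
    exact ⟨hmem.1, hlt 1 (by omega) (by omega), hlt 2 (by omega) (by omega),
      hlt 3 (by omega) (by omega)⟩
  · rintro ⟨h₄, h₁, h₂, h₃⟩
    have hmem : 4 ∈ {n | n ∈ S ∧ n ≠ 0} := ⟨h₄, four_ne_zero⟩
    refine le_antisymm (Nat.sInf_le hmem) (le_csInf ⟨4, hmem⟩ ?_)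
    rintro n ⟨hn, h0⟩
    by_contra! hlt
    interval_cases n <;> contradiction

theorem nsMultiplicity_kunzSet_eq_four_iff (x y z : ℕ) :
    nsMultiplicity (kunzSet x y z) = 4 ↔ 1 ≤ x ∧ 1 ≤ y ∧ 1 ≤ z := by
  simp [nsMultiplicity_eq_four_iff, mem_kunzSet, Nat.one_le_iff_ne_zero]

theorem nsFrobenius_kunzSet_mod_four_eq_three_iff {x y z : ℕ} (hx : 1 ≤ x) (hy : 1 ≤ y)
    (hz : 1 ≤ z) : nsFrobenius (kunzSet x y z) % 4 = 3 ↔ x ≤ z ∧ y ≤ z := by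
  have hbdd : BddAbove (kunzSet x y z)ᶜ := (finite_compl_kunzSet x y z).bddAbove
  have h₁ : 4 * (x - 1) + 1 ∈ (kunzSet x y z)ᶜ := by rw [Set.mem_compl_iff, mem_kunzSet]; omega
  have h₂ : 4 * (y - 1) + 2 ∈ (kunzSet x y z)ᶜ := by rw [Set.mem_compl_iff, mem_kunzSet]; omega
  have h₃ : 4 * (z - 1) + 3 ∈ (kunzSet x y z)ᶜ := by rw [Set.mem_compl_iff, mem_kunzSet]; omega
  have hmem : sSup (kunzSet x y z)ᶜ ∈ (kunzSet x y z)ᶜ := Nat.sSup_mem ⟨_, h₁⟩ hbdd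
  replace h₁ := le_csSup hbdd h₁
  replace h₂ := le_csSup hbdd h₂
  replace h₃ := le_csSup hbdd h₃
  rw [Set.mem_compl_iff, mem_kunzSet] at hmem
  unfold nsFrobenius
  omega

theorem kunzSet_injective {x y z x' y' z' : ℕ} (h : kunzSet x y z = kunzSet x' y' z') :
    x = x' ∧ y = y' ∧ z = z' := by
  simp only [Set.ext_iff, mem_kunzSet] at h
  have h₁ : x' ≤ x := by have := (h (4 * x + 1)).1; omega
  have h₁' : x ≤ x' := by have := (h (4 * x' + 1)).2; omega
  have h₂ : y' ≤ y := by have := (h (4 * y + 2)).1; omega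
  have h₂' : y ≤ y' := by have := (h (4 * y' + 2)).2; omega
  have h₃ : z' ≤ z := by have := (h (4 * z + 3)).1; omega
  have h₃' : z ≤ z' := by have := (h (4 * z' + 3)).2; omega
  omega

theorem IsNumericalSemigroup.exists_mem_iff_le {S : Set ℕ} (hS : IsNumericalSemigroup S)
    (h₄ : 4 ∈ S) (j : ℕ) : ∃ x, ∀ k, 4 * k + j ∈ S ↔ x ≤ k := by
  have hne : {k | 4 * k + j ∈ S}.Nonempty := by
    obtain ⟨N, hN⟩ := hS.2.2.bddAbove
    refine ⟨N + 1, by_contra fun h ↦ ?_⟩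
    have : 4 * (N + 1) + j ≤ N := hN h
    omega
  refine ⟨sInf {k | 4 * k + j ∈ S}, fun k ↦ ⟨fun h ↦ Nat.sInf_le h, fun h ↦ ?_⟩⟩
  induction k, h using Nat.le_induction with
  | base => exact Nat.sInf_mem hne
  | succ k _ ih =>
    have := hS.2.1 _ ih _ h₄
    rwa [show 4 * k + j + 4 = 4 * (k + 1) + j by ring] at this

theorem IsNumericalSemigroup.exists_eq_kunzSet {S : Set ℕ} (hS : IsNumericalSemigroup S)
    (h₄ : 4 ∈ S) : ∃ x y z, S = kunzSet x y z := by
  obtain ⟨w, hw⟩ := hS.exists_mem_iff_le h₄ 0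
  obtain ⟨x, hx⟩ := hS.exists_mem_iff_le h₄ 1
  obtain ⟨y, hy⟩ := hS.exists_mem_iff_le h₄ 2
  obtain ⟨z, hz⟩ := hS.exists_mem_iff_le h₄ 3
  have hw0 : w ≤ 0 := (hw 0).1 hS.1
  refine ⟨x, y, z, Set.ext fun n ↦ ?_⟩
  rw [mem_kunzSet]
  have hn : n % 4 = 0 ∨ n % 4 = 1 ∨ n % 4 = 2 ∨ n % 4 = 3 := by omega
  rcases hn with h | h | h | h
  · rw [show n = 4 * (n / 4) + 0 by omega, hw]; omega
  · rw [show n = 4 * (n / 4) + 1 by omega, hx]; omega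
  · rw [show n = 4 * (n / 4) + 2 by omega, hy]; omega
  · rw [show n = 4 * (n / 4) + 3 by omega, hz]; omega

/-- The pairs `(y, x)` such that `(x, y, g - x - y)` are the Kunz coordinates of a semigroup of
multiplicity `4` whose Frobenius number is `3` modulo `4`. -/
def kunzPairs (g : ℕ) : Finset (Σ _ : ℕ, ℕ) :=
  (Icc 1 (2 * g / 5)).sigma fun y ↦
    if y ≤ g / 3 then Icc ((g + 1) / 2 - y) ((g - y) / 2) else Icc ((y + 1) / 2) (g - 2 * y)

theorem mem_kunzPairs {g x y : ℕ} : (⟨y, x⟩ : Σ _ : ℕ, ℕ) ∈ kunzPairs g ↔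
    1 ≤ x ∧ 1 ≤ y ∧ y ≤ 2 * x ∧ g ≤ 2 * x + 2 * y ∧ 2 * x + y ≤ g ∧ x + 2 * y ≤ g := by
  rw [kunzPairs, mem_sigma]
  dsimp only
  split_ifs <;> simp only [mem_Icc] <;> omega

theorem numSgpsFrobMod4_four_three_eq_card (g : ℕ) :
    numSgpsFrobMod4 4 g 3 = #(kunzPairs g) := by
  have key : {S : Set ℕ | IsNumericalSemigroup S ∧ nsMultiplicity S = 4 ∧ nsGenus S = g ∧
      nsFrobenius S % 4 = 3} =
      (fun p : Σ _ : ℕ, ℕ ↦ kunzSet p.2 p.1 (g - p.2 - p.1)) '' (kunzPairs g : Set _) := by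
    ext S
    simp only [Set.mem_ofPred_eq, Set.mem_image, mem_coe]
    constructor
    · rintro ⟨hS, hm, hg, hF⟩
      obtain ⟨x, y, z, rfl⟩ := hS.exists_eq_kunzSet (nsMultiplicity_eq_four_iff.1 hm).1
      rw [isNumericalSemigroup_kunzSet_iff] at hS
      rw [nsMultiplicity_kunzSet_eq_four_iff] at hm
      rw [nsGenus_kunzSet] at hg
      rw [nsFrobenius_kunzSet_mod_four_eq_three_iff hm.1 hm.2.1 hm.2.2] at hF
      refine ⟨⟨y, x⟩, mem_kunzPairs.2 (by omega), ?_⟩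
      dsimp only
      rw [show g - x - y = z by omega]
    · rintro ⟨⟨y, x⟩, hp, rfl⟩
      rw [mem_kunzPairs] at hp
      dsimp only
      rw [isNumericalSemigroup_kunzSet_iff, nsMultiplicity_kunzSet_eq_four_iff, nsGenus_kunzSet,
        nsFrobenius_kunzSet_mod_four_eq_three_iff (by omega) (by omega) (by omega)]
      omega
  rw [numSgpsFrobMod4, key, Set.InjOn.ncard_image, Set.ncard_coe_finset]
  rintro ⟨y, x⟩ - ⟨y', x'⟩ - h
  obtain ⟨hx, hy, -⟩ := kunzSet_injective h
  dsimp only at hx hy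
  rw [hx, hy]

theorem four_mul_sum_card_Icc_le_third (g n : ℕ) (hn : n ≤ g / 3) :
    4 * ∑ y ∈ Ico 1 (n + 1), (#(Icc ((g + 1) / 2 - y) ((g - y) / 2)) : ℤ) =
      n ^ 2 + 4 * n - 2 * n * (g % 2 : ℕ) - (1 - 2 * (g % 2 : ℕ)) * (n % 2 : ℕ) := by
  induction n with
  | zero => simp
  | succ n ih =>
    rw [sum_Ico_succ_top (by omega), mul_add, ih (by omega), Nat.card_Icc]
    rcases Nat.mod_two_eq_zero_or_one g with h | h <;>
    rcases Nat.mod_two_eq_zero_or_one n with h' | h'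
    · have h₁ : (n + 1) % 2 = 1 := by omega
      have h₂ : (((g - (n + 1)) / 2 + 1 - ((g + 1) / 2 - (n + 1)) : ℕ) : ℤ) * 2 = n + 2 := by
        omega
      rw [h, h', h₁]
      push_cast
      linear_combination 2 * h₂
    · have h₁ : (n + 1) % 2 = 0 := by omega
      have h₂ : (((g - (n + 1)) / 2 + 1 - ((g + 1) / 2 - (n + 1)) : ℕ) : ℤ) * 2 = n + 3 := by
        omega
      rw [h, h', h₁]
      push_cast
      linear_combination 2 * h₂
    · have h₁ : (n + 1) % 2 = 1 := by omega
      have h₂ : (((g - (n + 1)) / 2 + 1 - ((g + 1) / 2 - (n + 1)) : ℕ) : ℤ) * 2 = n + 2 := by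
        omega
      rw [h, h', h₁]
      push_cast
      linear_combination 2 * h₂
    · have h₁ : (n + 1) % 2 = 0 := by omega
      have h₂ : (((g - (n + 1)) / 2 + 1 - ((g + 1) / 2 - (n + 1)) : ℕ) : ℤ) * 2 = n + 1 := by
        omega
      rw [h, h', h₁]
      push_cast
      linear_combination 2 * h₂

theorem four_mul_sum_card_Icc_gt_third (g n m : ℕ) (hnm : n ≤ m) (hm : m ≤ 2 * g / 5) :
    4 * ∑ y ∈ Ico (n + 1) (m + 1), (#(Icc ((y + 1) / 2) (g - 2 * y)) : ℤ) =
      (4 * (g + 1) * m - 5 * m * (m + 1) - m - (m % 2 : ℕ)) -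
        (4 * (g + 1) * n - 5 * n * (n + 1) - n - (n % 2 : ℕ)) := by
  induction m, hnm using Nat.le_induction with
  | base => simp
  | succ m hnm ih =>
    rw [sum_Ico_succ_top (by omega), mul_add, ih (by omega), Nat.card_Icc]
    have h₂ : ((g - 2 * (m + 1) + 1 - (m + 1 + 1) / 2 : ℕ) : ℤ) * 4 =
        4 * g + 4 - 10 * (m + 1) - 2 * ((m + 1) % 2 : ℕ) := by omega
    have h₃ : (((m + 1) % 2 : ℕ) : ℤ) = 1 - (m % 2 : ℕ) := by omega
    rw [h₃] at h₂ ⊢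
    push_cast at h₂ ⊢
    linear_combination h₂

theorem four_mul_card_kunzPairs (g : ℕ) :
    4 * (#(kunzPairs g) : ℤ) =
      ((g / 3 : ℕ) ^ 2 + 4 * (g / 3 : ℕ) - 2 * (g / 3 : ℕ) * (g % 2 : ℕ) -
        (1 - 2 * (g % 2 : ℕ)) * (g / 3 % 2 : ℕ)) +
      ((4 * (g + 1) * (2 * g / 5 : ℕ) - 5 * (2 * g / 5 : ℕ) * ((2 * g / 5 : ℕ) + 1) -
          (2 * g / 5 : ℕ) - (2 * g / 5 % 2 : ℕ)) -
        (4 * (g + 1) * (g / 3 : ℕ) - 5 * (g / 3 : ℕ) * ((g / 3 : ℕ) + 1) -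
          (g / 3 : ℕ) - (g / 3 % 2 : ℕ))) := by
  rw [← four_mul_sum_card_Icc_le_third g (g / 3) le_rfl,
    ← four_mul_sum_card_Icc_gt_third g (g / 3) (2 * g / 5) (by omega) le_rfl, ← mul_add,
    kunzPairs, card_sigma]
  congr 1
  rw [← Ico_succ_right_eq_Icc, Order.succ_eq_add_one,
    ← sum_Ico_consecutive _ (by omega : 1 ≤ g / 3 + 1) (by omega : g / 3 + 1 ≤ 2 * g / 5 + 1)]
  push_cast
  congr 1
  · refine sum_congr rfl fun y hy ↦ ?_
    rw [mem_Ico] at hy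
    rw [if_pos (by omega)]
  · refine sum_congr rfl fun y hy ↦ ?_
    rw [mem_Ico] at hy
    rw [if_neg (by omega)]

/-- count of numerical semigroups with multiplicity 4, genus `g ≥ 7`, Frobenius number ≡ 3 (mod 4). -/
theorem statement15 (g : ℕ) (hg : 7 ≤ g) :
    (numSgpsFrobMod4 4 g 3 : ℚ) =
      ((⌊(g : ℚ)/5⌋ : ℚ))^2 - ((⌊2*(g : ℚ)/5⌋ : ℚ))^2 - (3/2) * ((⌊((g : ℚ)+2)/3⌋ : ℚ))^2 - (3/2) * ((⌊((g : ℚ)+5)/6⌋ : ℚ))^2 + ((⌊(g : ℚ)/5⌋ : ℚ)) + ((g : ℚ) - 1 - ((⌊(g : ℚ)/5⌋ : ℚ))) * ((⌊2*(g : ℚ)/5⌋ : ℚ)) + ((g : ℚ)/2 - 3/4) * ((⌊(g : ℚ)/2⌋ : ℚ)) + ((g : ℚ) + 1/2) * ((⌊((g : ℚ)+2)/3⌋ : ℚ)) + ((g : ℚ) + 1/2 - ((⌊(g : ℚ)/2⌋ : ℚ))) * ((⌊((g : ℚ)+5)/6⌋ : ℚ)) - 5*(g : ℚ)^2/8 +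 5*(g : ℚ)/8 := by
  have hfloor (a d : ℕ) : ⌊(a : ℚ) / d⌋ = ((a / d : ℕ) : ℤ) := by
    rw [Rat.floor_natCast_div_natCast, Int.natCast_div]
  have h₁ : ⌊(g : ℚ) / 5⌋ = ((g / 5 : ℕ) : ℤ) := by exact_mod_cast hfloor g 5
  have h₂ : ⌊2 * (g : ℚ) / 5⌋ = ((2 * g / 5 : ℕ) : ℤ) := by exact_mod_cast hfloor (2 * g) 5
  have h₃ : ⌊((g : ℚ) + 2) / 3⌋ = (((g + 2) / 3 : ℕ) : ℤ) := by exact_mod_cast hfloor (g + 2) 3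
  have h₄ : ⌊((g : ℚ) + 5) / 6⌋ = (((g + 5) / 6 : ℕ) : ℤ) := by exact_mod_cast hfloor (g + 5) 6
  have h₅ : ⌊(g : ℚ) / 2⌋ = ((g / 2 : ℕ) : ℤ) := by exact_mod_cast hfloor g 2
  have hcard := congrArg (Int.cast : ℤ → ℚ) (four_mul_card_kunzPairs g)
  rw [h₁, h₂, h₃, h₄, h₅, numSgpsFrobMod4_four_three_eq_card]
  clear h₁ h₂ h₃ h₄ h₅ hfloor hg
  obtain ⟨k, r, hr, rfl⟩ : ∃ k r, r < 30 ∧ g = 30 * k + r :=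
    ⟨g / 30, g % 30, Nat.mod_lt _ (by norm_num), (Nat.div_add_mod _ _).symm⟩
  generalize #(kunzPairs (30 * k + r)) = c at hcard ⊢
  have e₁ : (30 * k + r) / 5 = 6 * k + r / 5 := by omega
  have e₂ : 2 * (30 * k + r) / 5 = 12 * k + 2 * r / 5 := by omega
  have e₃ : (30 * k + r + 2) / 3 = 10 * k + (r + 2) / 3 := by omega
  have e₄ : (30 * k + r + 5) / 6 = 5 * k + (r + 5) / 6 := by omega
  have e₅ : (30 * k + r) / 2 = 15 * k + r / 2 := by omega
  have e₆ : (30 * k + r) / 3 = 10 * k + r / 3 := by omega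
  have e₇ : (30 * k + r) % 2 = r % 2 := by omega
  have e₈ : (10 * k + r / 3) % 2 = r / 3 % 2 := by omega
  have e₉ : (12 * k + 2 * r / 5) % 2 = 2 * r / 5 % 2 := by omega
  rw [e₂, e₆, e₇, e₈, e₉] at hcard
  rw [e₁, e₂, e₃, e₄, e₅]
  clear e₁ e₂ e₃ e₄ e₅ e₆ e₇ e₈ e₉
  interval_cases r <;> norm_num at hcard ⊢ <;> linear_combination hcard / 4
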